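/- A function f from the arcs of the split network to ℕ is a feasible integer flow if and only if there exist directed paths p_1, …, p_k in E, with p_s from v_s to τ, whose vertex sets are pairwise disjoint apart from the common endpoint τ, such that f((i,IN)→(i,OUT)) = 1 exactly when i lies on some p_s; f((i,OUT)→(j,IN)) = 1 exactly when (i,j) is a consecutive pair of some p_s; f((i,OUT)→τ) = 1 exactly when (i,τ) is a consecutive pair of some p_s; and f takes the value 0 on all other arcs. (Observation 1: after splitting each node into an In node and an Out node joined by an arc of capacity 1, the single-ship-type repositioning problem without product flow is a pure network flow problem whose integer flows are exactly the node-distinct systems of one path per ship.) -/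

import Mathlib

open scoped Classical

/-- `l` is a directed path (as a list of vertices) from `a` to `t` in the digraph `E`:
a nonempty finite sequence starting at `a`, ending at `t`, with consecutive pairs
related by `E`. -/
def IsPathTo {V : Type*} (E : V → V → Prop) (a t : V) (l : List V) : Prop :=
  l.head? = some a ∧ l.getLast? = some t ∧ l.Chain' E

/-- The arcs of the split network: each vertex `i ≠ τ` is split into an In node and an
Out node joined by a split arc; each arc `E i j` with `i, j ≠ τ` gives an arc from
`(i, OUT)` to `(j, IN)`; and each arc `E i τ` gives an arc from `(i, OUT)` to `τ`. -/
inductive SplitArc (V : Type*) (E : V → V → Prop) (τ : V) : Type _ where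
  | split (i : V) (hi : i ≠ τ) : SplitArc V E τ
  | move (i j : V) (hij : E i j) (hi : i ≠ τ) (hj : j ≠ τ) : SplitArc V E τ
  | toSink (i : V) (hiτ : E i τ) (hi : i ≠ τ) : SplitArc V E τ

/-- Flow on the split arc of `i` (zero if there is no such arc). -/
noncomputable def splitFlow {V : Type*} (E : V → V → Prop) (τ : V)
    (f : SplitArc V E τ → ℕ) (i : V) : ℕ :=
  if h : i ≠ τ then f (.split i h) else 0

/-- Flow on the arc from `(i, OUT)` to `(j, IN)` (zero if there is no such arc). -/
noncomputable def moveFlow {V : Type*} (E : V → V → Prop) (τ : V)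
    (f : SplitArc V E τ → ℕ) (i j : V) : ℕ :=
  if h : E i j ∧ i ≠ τ ∧ j ≠ τ then f (.move i j h.1 h.2.1 h.2.2) else 0

/-- Flow on the arc from `(i, OUT)` to the sink `τ` (zero if there is no such arc). -/
noncomputable def sinkFlow {V : Type*} (E : V → V → Prop) (τ : V)
    (f : SplitArc V E τ → ℕ) (i : V) : ℕ :=
  if h : E i τ ∧ i ≠ τ then f (.toSink i h.1 h.2) else 0

/-- `f` is a feasible integer flow in the split network: at most one unit on every
split arc; at any In node `(j, IN)` the outflow (the split arc of `j`) equals the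
inflow plus `1` if `j` is one of the sources `v s` (and just the inflow otherwise);
at any Out node `(i, OUT)` the outflow equals the inflow; at `τ` the inflow minus the
(zero) outflow equals `k`. -/
noncomputable def IsFeasibleFlow {V : Type*} [Fintype V] (E : V → V → Prop) (τ : V)
    (k : ℕ) (v : Fin k → V) (f : SplitArc V E τ → ℕ) : Prop :=
  (∀ (i : V) (hi : i ≠ τ), f (.split i hi) ≤ 1) ∧
  (∀ j : V, j ≠ τ →
    splitFlow E τ f j =
      (∑ i : V, moveFlow E τ f i j) + (if ∃ s, v s = j then 1 else 0)) ∧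
  (∀ i : V, i ≠ τ →
    (∑ j : V, moveFlow E τ f i j) + sinkFlow E τ f i = splitFlow E τ f i) ∧
  ((∑ i : V, sinkFlow E τ f i) = k)

theorem aux_infix_cons {V : Type*} (x y a b : V) (l : List V) :
    [x, y] <:+: a :: b :: l ↔ (x = a ∧ y = b) ∨ [x, y] <:+: b :: l := by
  rw [List.infix_cons_iff]; simp [List.cons_prefix_cons]

theorem aux_infix_single {V : Type*} (x y a : V) : ¬ [x, y] <:+: [a] := by
  intro h; simpa using h.length_le

theorem aux_mem {V : Type*} {x y : V} {l : List V} (h : [x, y] <:+: l) : x ∈ l ∧ y ∈ l :=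
  ⟨h.subset (by simp), h.subset (by simp)⟩

theorem aux_rel {V : Type*} {R : V → V → Prop} {x y : V} {l : List V} (h : [x, y] <:+: l)
    (hc : l.IsChain R) : R x y := by
  have := hc.infix h
  simpa using this

theorem aux_succ {V : Type*} {t x : V} : ∀ {l : List V}, l.getLast? = some t → x ∈ l → x ≠ t →
    ∃ y, [x, y] <:+: l
  | [], h, _, _ => by simp at h
  | [a], h, hx, hne => by simp_all
  | a :: b :: l, h, hx, hne => by
    rcases List.mem_cons.1 hx with rfl | hx
    · exact ⟨b, (aux_infix_cons ..).2 (Or.inl ⟨rfl, rfl⟩)⟩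
    · obtain ⟨y, hy⟩ := aux_succ (l := b :: l) (by simpa using h) hx hne
      exact ⟨y, (aux_infix_cons ..).2 (Or.inr hy)⟩

theorem aux_pred {V : Type*} {x : V} : ∀ {l : List V} {a : V}, l.head? = some a → x ∈ l → x ≠ a →
    ∃ y, [y, x] <:+: l
  | [], _, h, _, _ => by simp at h
  | [a], _, h, hx, hne => by simp_all
  | a :: b :: l, c, h, hx, hne => by
    have hac : a = c := by simpa using h
    subst hac
    rcases List.mem_cons.1 hx with rfl | hx
    · exact absurd rfl hne
    · by_cases hb : x = b
      · exact ⟨a, (aux_infix_cons ..).2 (Or.inl ⟨rfl, hb⟩)⟩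
      · obtain ⟨y, hy⟩ := aux_pred (l := b :: l) (a := b) rfl hx hb
        exact ⟨y, (aux_infix_cons ..).2 (Or.inr hy)⟩

theorem aux_nodup {V : Type*} {E : V → V → Prop} (hacyc : ∀ x, ¬ Relation.TransGen E x x)
    {l : List V} (h : l.IsChain E) : l.Nodup := by
  have h1 : l.IsChain (Relation.TransGen E) := h.imp (fun _ _ => Relation.TransGen.single)
  have h2 := List.isChain_iff_pairwise.1 h1
  exact h2.imp (fun {a b} hab hne => by subst hne; exact hacyc _ hab)

theorem aux_succ_unique {V : Type*} {x y z : V} : ∀ {l : List V}, l.Nodup → [x, y] <:+: l →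
    [x, z] <:+: l → y = z
  | [], _, h, _ => by simp at h
  | [a], _, h, _ => (aux_infix_single _ _ _ h).elim
  | a :: b :: l, hn, h1, h2 => by
    have hn' := List.nodup_cons.1 hn
    rw [aux_infix_cons] at h1 h2
    rcases h1 with ⟨rfl, rfl⟩ | h1 <;> rcases h2 with ⟨h3, rfl⟩ | h2
    · rfl
    · exact absurd (aux_mem h2).1 hn'.1
    · subst h3; exact absurd (aux_mem h1).1 hn'.1
    · exact aux_succ_unique hn'.2 h1 h2

theorem aux_no_pred {V : Type*} {x a : V} : ∀ {l : List V}, l.Nodup → l.head? = some a →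
    ¬ [x, a] <:+: l
  | [], _, h => by simp at h
  | [b], _, h => aux_infix_single _ _ _
  | b :: c :: l, hn, h => by
    have hn' := List.nodup_cons.1 hn
    have hba : b = a := by simpa using h
    subst hba
    rw [aux_infix_cons]
    rintro (⟨rfl, rfl⟩ | h1)
    · simp at hn'
    · exact hn'.1 (aux_mem h1).2

theorem aux_pred_unique {V : Type*} {x y z : V} : ∀ {l : List V}, l.Nodup → [y, x] <:+: l →
    [z, x] <:+: l → y = z
  | [], _, h, _ => by simp at h
  | [a], _, h, _ => (aux_infix_single _ _ _ h).elim
  | a :: b :: l, hn, h1, h2 => by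
    have hn' := List.nodup_cons.1 hn
    rw [aux_infix_cons] at h1 h2
    rcases h1 with ⟨rfl, rfl⟩ | h1 <;> rcases h2 with ⟨rfl, h3⟩ | h2
    · rfl
    · exact absurd h2 (aux_no_pred hn'.2 rfl)
    · subst h3; exact absurd h1 (aux_no_pred hn'.2 rfl)
    · exact aux_pred_unique hn'.2 h1 h2

theorem aux_reach {V : Type*} {R : V → V → Prop} {x : V} : ∀ {l : List V} {a : V},
    l.head? = some a → l.IsChain R → x ∈ l → Relation.ReflTransGen R a x
  | [], _, h, _, _ => by simp at h
  | [b], a, h, _, hx => by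
    have h1 : b = a := by simpa using h
    have h2 : x = b := by simpa using hx
    subst h1 h2; exact .refl
  | b :: c :: l, a, h, hc, hx => by
    have h1 : b = a := by simpa using h
    subst h1
    rcases List.mem_cons.1 hx with rfl | hx
    · exact .refl
    · have hc' := List.isChain_cons_cons.1 hc
      exact .head hc'.1 (aux_reach rfl hc'.2 hx)

theorem aux_sum {V : Type*} [Fintype V] (P : V → Prop) [DecidablePred P]
    [Decidable (∃ x, P x)] (h : ∀ x y, P x → P y → x = y) :
    (∑ x, if P x then 1 else 0 : ℕ) = if ∃ x, P x then 1 else 0 := by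
  by_cases hx : ∃ x, P x
  · obtain ⟨x, hx⟩ := hx
    rw [if_pos ⟨x, hx⟩, Finset.sum_eq_single x]
    · simp [hx]
    · intro b _ hb
      rw [if_neg fun hp => hb (h _ _ hp hx)]
    · simp
  · rw [if_neg hx]
    exact Finset.sum_eq_zero fun x _ => if_neg fun hp => hx ⟨x, hp⟩

theorem aux_sum_le {V : Type*} [Fintype V] (g : V → ℕ) (h : ∑ x, g x ≤ 1) {x y : V}
    (hx : 1 ≤ g x) (hy : 1 ≤ g y) : x = y := by
  by_contra hne
  have := Finset.add_le_sum (f := g) (s := Finset.univ) (i := x) (j := y)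
    (fun _ _ => Nat.zero_le _) (Finset.mem_univ _) (Finset.mem_univ _) hne
  omega

theorem aux_le_sum {V : Type*} [Fintype V] (g : V → ℕ) (x : V) : g x ≤ ∑ x, g x :=
  Finset.single_le_sum (fun _ _ => Nat.zero_le _) (Finset.mem_univ x)

theorem aux_sum_pos {V : Type*} [Fintype V] (g : V → ℕ) (h : 1 ≤ ∑ x, g x) : ∃ x, 1 ≤ g x := by
  by_contra! hc
  have : ∑ x, g x = 0 := Finset.sum_eq_zero fun x _ => by have := hc x; omega
  omega

/-- Combined flow out of `x` towards `y`. -/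
noncomputable def arcFlow {V : Type*} (E : V → V → Prop) (τ : V)
    (f : SplitArc V E τ → ℕ) (x y : V) : ℕ :=
  if y = τ then sinkFlow E τ f x else moveFlow E τ f x y

theorem moveFlow_sink {V : Type*} (E : V → V → Prop) (τ : V)
    (f : SplitArc V E τ → ℕ) (x : V) : moveFlow E τ f x τ = 0 := by simp [moveFlow]

theorem arcFlow_rel {V : Type*} {E : V → V → Prop} {τ : V}
    {f : SplitArc V E τ → ℕ} {x y : V} (h : 1 ≤ arcFlow E τ f x y) : E x y ∧ x ≠ τ := by
  unfold arcFlow sinkFlow moveFlow at h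
  split_ifs at h with h1 h2 h3
  · subst h1; exact h2
  · omega
  · exact ⟨h3.1, h3.2.1⟩
  · omega

theorem arcFlow_sum {V : Type*} [Fintype V] (E : V → V → Prop) (τ : V)
    (f : SplitArc V E τ → ℕ) (x : V) :
    ∑ y, arcFlow E τ f x y = ∑ y, moveFlow E τ f x y + sinkFlow E τ f x := by
  have : ∀ y, arcFlow E τ f x y = moveFlow E τ f x y + if y = τ then sinkFlow E τ f x else 0 := by
    intro y
    unfold arcFlow
    split_ifs with h
    · subst h; simp [moveFlow_sink]
    · simp
  simp [this, Finset.sum_add_distrib]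

theorem aux_wf {V : Type*} [Fintype V] {E : V → V → Prop}
    (hacyc : ∀ x, ¬ Relation.TransGen E x x) :
    WellFounded E ∧ WellFounded (fun x y => E y x) := by
  have : IsTrans V (Relation.TransGen E) := ⟨fun _ _ _ => Relation.TransGen.trans⟩
  have : Std.Irrefl (Relation.TransGen E) := ⟨hacyc⟩
  have : IsTrans V (fun x y => Relation.TransGen E y x) := ⟨fun _ _ _ h h' => h'.trans h⟩
  have : Std.Irrefl (fun x y => Relation.TransGen E y x) := ⟨hacyc⟩
  refine ⟨Subrelation.wf (fun h => Relation.TransGen.single h)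
    (Finite.wellFounded_of_trans_of_irrefl (Relation.TransGen E)),
    Subrelation.wf (fun h => Relation.TransGen.single h)
    (Finite.wellFounded_of_trans_of_irrefl (fun x y => Relation.TransGen E y x))⟩

theorem forward_dir {V : Type*} [Fintype V] (E : V → V → Prop)
    (hacyc : ∀ x, ¬ Relation.TransGen E x x)
    (τ : V)
    (k : ℕ) (v : Fin k → V) (hinj : Function.Injective v) (hvτ : ∀ s, v s ≠ τ)
    (f : SplitArc V E τ → ℕ) (hf : IsFeasibleFlow E τ k v f) :
      ∃ p : Fin k → List V,
        (∀ s, (p s).head? = some (v s) ∧ (p s).getLast? = some τ ∧ (p s).IsChain E) ∧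
        (∀ s t : Fin k, s ≠ t → ∀ x : V, x ∈ p s → x ∈ p t → x = τ) ∧
        (∀ (i : V), i ≠ τ → splitFlow E τ f i = if ∃ s, i ∈ p s then 1 else 0) ∧
        (∀ (i j : V), arcFlow E τ f i j = if ∃ s, [i, j] <:+: p s then 1 else 0) := by
  obtain ⟨wf1, wf2⟩ := aux_wf hacyc
  obtain ⟨h1, h2, h3, -⟩ := hf
  let F : V → V → Prop := fun x y => 1 ≤ arcFlow E τ f x y
  have hF : ∀ x y, F x y → E x y ∧ x ≠ τ := fun x y h => arcFlow_rel h
  have hle : ∀ i, splitFlow E τ f i ≤ 1 := by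
    intro i; unfold splitFlow; split_ifs <;> simp [h1]
  have hout : ∀ x, x ≠ τ → ∑ y, arcFlow E τ f x y = splitFlow E τ f x := by
    intro x hx; rw [arcFlow_sum, h3 x hx]
  have hin : ∀ y, y ≠ τ → splitFlow E τ f y =
      (∑ x, arcFlow E τ f x y) + (if ∃ s, v s = y then 1 else 0) := by
    intro y hy; rw [h2 y hy]; simp [arcFlow, hy]
  have hFs : ∀ x y, F x y → 1 ≤ splitFlow E τ f x := by
    intro x y h
    rw [← hout x (hF x y h).2]
    exact le_trans h (aux_le_sum (fun y => arcFlow E τ f x y) y)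
  have hsucc : ∀ x y z, F x y → F x z → y = z := by
    intro x y z hy hz
    exact aux_sum_le (fun y => arcFlow E τ f x y) (by rw [hout x (hF x y hy).2]; exact hle x) hy hz
  have hpred : ∀ x y z, z ≠ τ → F x z → F y z → x = y := by
    intro x y z hz hx hy
    refine aux_sum_le (fun x => arcFlow E τ f x z) ?_ hx hy
    have := hin z hz; have := hle z; omega
  have hsrc : ∀ x s, ¬ F x (v s) := by
    intro x s h
    have h4 := hin (v s) (hvτ s)
    rw [if_pos ⟨s, rfl⟩] at h4
    have h5 := aux_le_sum (fun x => arcFlow E τ f x (v s)) x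
    have := hle (v s)
    have h6 : 1 ≤ arcFlow E τ f x (v s) := h
    omega
  have hFt : ∀ x y, y ≠ τ → F x y → 1 ≤ splitFlow E τ f y := by
    intro x y hy h
    have h4 := hin y hy
    have h5 := aux_le_sum (fun x => arcFlow E τ f x y) x
    have h6 : 1 ≤ arcFlow E τ f x y := h
    omega
  have hex : ∀ x, x ≠ τ → 1 ≤ splitFlow E τ f x →
      ∃ l : List V, l.head? = some x ∧ l.getLast? = some τ ∧ l.IsChain F := by
    intro x
    induction x using wf2.induction with
    | _ x ih =>
      intro hx hs
      obtain ⟨y, hy⟩ := aux_sum_pos (fun y => arcFlow E τ f x y) (by rw [hout x hx]; exact hs)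
      have hy : F x y := hy
      by_cases hyτ : y = τ
      · subst hyτ
        exact ⟨[x, y], by simp, by simp, by simpa using hy⟩
      · obtain ⟨l, hl1, hl2, hl3⟩ := ih y (hF x y hy).1 hyτ (hFt x y hyτ hy)
        cases l with
        | nil => simp at hl1
        | cons a l =>
          have : a = y := by simpa using hl1
          subst this
          exact ⟨x :: a :: l, by simp, by simpa using hl2, List.isChain_cons_cons.2 ⟨hy, hl3⟩⟩
  have hvs : ∀ s, 1 ≤ splitFlow E τ f (v s) := by
    intro s
    have h4 := hin (v s) (hvτ s)
    rw [if_pos ⟨s, rfl⟩] at h4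
    omega
  choose p hp1 hp2 hp3 using fun s => hex (v s) (hvτ s) (hvs s)
  have hcov : ∀ i, i ≠ τ → 1 ≤ splitFlow E τ f i → ∃ s, i ∈ p s := by
    intro i
    induction i using wf1.induction with
    | _ i ih =>
      intro hi hs
      by_cases hsr : ∃ s, v s = i
      · obtain ⟨s, rfl⟩ := hsr
        exact ⟨s, List.mem_of_mem_head? (hp1 s)⟩
      · rw [hin i hi, if_neg hsr] at hs
        obtain ⟨c, hc⟩ := aux_sum_pos (fun x => arcFlow E τ f x i) (by simpa using hs)
        have hc : F c i := hc
        obtain ⟨s, hcs⟩ := ih c (hF c i hc).1 (hF c i hc).2 (hFs c i hc)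
        obtain ⟨y, hy⟩ := aux_succ (hp2 s) hcs (hF c i hc).2
        have : y = i := hsucc c y i (aux_rel hy (hp3 s)) hc
        subst this
        exact ⟨s, (aux_mem hy).2⟩
  have hdisj : ∀ s t x, x ≠ τ → Relation.ReflTransGen F (v s) x →
      Relation.ReflTransGen F (v t) x → s = t := by
    intro s t x hx hs
    induction hs with
    | refl =>
      intro ht
      rcases Relation.ReflTransGen.cases_tail ht with h | ⟨c, -, h⟩
      · exact hinj h
      · exact absurd h (hsrc _ _)
    | @tail a b _ hab ih =>
      intro ht
      rcases Relation.ReflTransGen.cases_tail ht with h | ⟨c, hc, h⟩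
      · subst h; exact absurd hab (hsrc _ _)
      · have := hpred c a b hx h hab
        subst this
        exact ih (hF _ _ h).2 hc
  refine ⟨p, fun s => ⟨hp1 s, hp2 s, (hp3 s).imp fun x y h => (hF x y h).1⟩, ?_, ?_, ?_⟩
  · intro s t hst x hxs hxt
    by_contra hx
    exact hst (hdisj s t x hx (aux_reach (hp1 s) (hp3 s) hxs) (aux_reach (hp1 t) (hp3 t) hxt))
  · intro i hi
    split_ifs with h
    · obtain ⟨s, hs⟩ := h
      obtain ⟨y, hy⟩ := aux_succ (hp2 s) hs hi
      exact le_antisymm (hle i) (hFs i y (aux_rel hy (hp3 s)))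
    · by_contra hne
      exact h (hcov i hi (by omega))
  · intro i j
    have hle1 : 1 ≤ arcFlow E τ f i j → arcFlow E τ f i j ≤ 1 := by
      intro h
      have := aux_le_sum (fun y => arcFlow E τ f i y) j
      rw [hout i (hF i j h).2] at this
      exact le_trans this (hle i)
    split_ifs with h
    · obtain ⟨s, hs⟩ := h
      have h5 : F i j := aux_rel hs (hp3 s)
      exact le_antisymm (hle1 h5) h5
    · by_contra hne
      have hij : F i j := Nat.one_le_iff_ne_zero.2 hne
      obtain ⟨s, hs⟩ := hcov i (hF i j hij).2 (hFs i j hij)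
      obtain ⟨y, hy⟩ := aux_succ (hp2 s) hs (hF i j hij).2
      have : y = j := hsucc i y j (aux_rel hy (hp3 s)) hij
      subst this
      exact h ⟨s, hy⟩

theorem backward_dir {V : Type*} [Fintype V] (E : V → V → Prop)
    (hacyc : ∀ x, ¬ Relation.TransGen E x x)
    (τ : V) (hτ : ∀ j : V, ¬ E τ j)
    (k : ℕ) (v : Fin k → V) (hinj : Function.Injective v) (hvτ : ∀ s, v s ≠ τ)
    (f : SplitArc V E τ → ℕ) (p : Fin k → List V)
    (hp : ∀ s, (p s).head? = some (v s) ∧ (p s).getLast? = some τ ∧ (p s).IsChain E)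
    (hd : ∀ s t : Fin k, s ≠ t → ∀ x : V, x ∈ p s → x ∈ p t → x = τ)
    (hs : ∀ (i : V), i ≠ τ → splitFlow E τ f i = if ∃ s, i ∈ p s then 1 else 0)
    (ha : ∀ (i j : V), arcFlow E τ f i j = if ∃ s, [i, j] <:+: p s then 1 else 0) :
    IsFeasibleFlow E τ k v f := by
  have hnd : ∀ s, (p s).Nodup := fun s => aux_nodup hacyc (hp s).2.2
  have hne : ∀ s i j, [i, j] <:+: p s → i ≠ τ := by
    rintro s i j h rfl
    exact hτ _ (aux_rel h (hp s).2.2)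
  have hout : ∀ x, x ≠ τ → ∑ y, arcFlow E τ f x y = splitFlow E τ f x := by
    intro x hx
    simp only [ha]
    rw [hs x hx, aux_sum]
    · congr 1
      apply propext
      constructor
      · rintro ⟨y, s, h⟩; exact ⟨s, (aux_mem h).1⟩
      · rintro ⟨s, h⟩
        obtain ⟨y, hy⟩ := aux_succ (hp s).2.1 h hx
        exact ⟨y, s, hy⟩
    · rintro y z ⟨s, h⟩ ⟨t, h'⟩
      by_cases hst : s = t
      · subst hst; exact aux_succ_unique (hnd s) h h'
      · exact absurd (hd s t hst x (aux_mem h).1 (aux_mem h').1) hx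
  have hin : ∀ y, y ≠ τ → splitFlow E τ f y =
      (∑ x, moveFlow E τ f x y) + (if ∃ s, v s = y then 1 else 0) := by
    intro y hy
    have : ∀ x, moveFlow E τ f x y = if ∃ s, [x, y] <:+: p s then 1 else 0 := by
      intro x; rw [← ha, arcFlow, if_neg hy]
    simp only [this]
    rw [hs y hy, aux_sum]
    · by_cases hsr : ∃ s, v s = y
      · rw [if_pos hsr]
        obtain ⟨s, rfl⟩ := hsr
        have hm : v s ∈ p s := List.mem_of_mem_head? (hp s).1
        rw [if_pos ⟨s, hm⟩, if_neg]
        rintro ⟨x, t, h⟩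
        by_cases hst : s = t
        · subst hst; exact aux_no_pred (hnd s) (hp s).1 h
        · exact hy (hd s t hst _ hm (aux_mem h).2)
      · rw [if_neg hsr, add_zero]
        congr 1
        apply propext
        constructor
        · rintro ⟨s, h⟩
          obtain ⟨x, hx⟩ := aux_pred (hp s).1 h (fun h => hsr ⟨s, h.symm⟩)
          exact ⟨x, s, hx⟩
        · rintro ⟨x, s, h⟩; exact ⟨s, (aux_mem h).2⟩
    · rintro x z ⟨s, h⟩ ⟨t, h'⟩
      by_cases hst : s = t
      · subst hst; exact aux_pred_unique (hnd s) h h'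
      · exact absurd (hd s t hst y (aux_mem h).2 (aux_mem h').2) hy
  have hout' : ∀ i, i ≠ τ →
      (∑ j : V, moveFlow E τ f i j) + sinkFlow E τ f i = splitFlow E τ f i := by
    intro i hi; rw [← arcFlow_sum, hout i hi]
  refine ⟨?_, hin, hout', ?_⟩
  · intro i hi
    have := hs i hi
    rw [splitFlow, dif_pos hi] at this
    rw [this]; split_ifs <;> simp
  · have e1 : ∀ i, (∑ j : V, moveFlow E τ f i j) + sinkFlow E τ f i = splitFlow E τ f i := by
      intro i
      by_cases hi : i = τ
      · subst hi; simp [moveFlow, sinkFlow, splitFlow]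
      · exact hout' i hi
    have e2 : ∀ y, splitFlow E τ f y =
        (∑ x, moveFlow E τ f x y) + (if ∃ s, v s = y then 1 else 0) := by
      intro y
      by_cases hy : y = τ
      · subst hy; simp [moveFlow, splitFlow, hvτ]
      · exact hin y hy
    have e3 := Finset.sum_congr (rfl : (Finset.univ : Finset V) = Finset.univ) (fun i _ => e1 i)
    have e4 := Finset.sum_congr (rfl : (Finset.univ : Finset V) = Finset.univ) (fun i _ => e2 i)
    rw [Finset.sum_add_distrib] at e3 e4
    rw [Finset.sum_comm] at e3
    have e5 : (∑ y : V, if ∃ s, v s = y then 1 else 0) = k := by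
      rw [← Finset.card_filter]
      have : (Finset.univ.filter fun y => ∃ s, v s = y) = Finset.univ.image v := by
        ext; simp
      rw [this, Finset.card_image_of_injective _ hinj]; simp
    omega

/-- Observation 1: the feasible integer flows of the split network are exactly the
indicator flows of systems of `k` directed paths `p s` from `v s` to `τ` whose vertex
sets are pairwise disjoint apart from the common endpoint `τ`. -/
theorem isFeasibleFlow_iff_paths {V : Type*} [Fintype V] (E : V → V → Prop)
    (hacyc : Irreflexive (Relation.TransGen E))
    (τ : V) (hτ : ∀ j : V, ¬ E τ j)
    (k : ℕ) (v : Fin k → V) (hinj : Function.Injective v) (hvτ : ∀ s, v s ≠ τ)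
    (f : SplitArc V E τ → ℕ) :
    IsFeasibleFlow E τ k v f ↔
      ∃ p : Fin k → List V,
        (∀ s, IsPathTo E (v s) τ (p s)) ∧
        (∀ s t : Fin k, s ≠ t → ∀ x : V, x ∈ p s → x ∈ p t → x = τ) ∧
        (∀ (i : V) (hi : i ≠ τ),
          f (.split i hi) = if ∃ s, i ∈ p s then 1 else 0) ∧
        (∀ (i j : V) (hij : E i j) (hi : i ≠ τ) (hj : j ≠ τ),
          f (.move i j hij hi hj) = if ∃ s, [i, j] <:+: p s then 1 else 0) ∧
        (∀ (i : V) (hiτ : E i τ) (hi : i ≠ τ),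
          f (.toSink i hiτ hi) = if ∃ s, [i, τ] <:+: p s then 1 else 0) := by
  have hac : ∀ x, ¬ Relation.TransGen E x x := fun x h => hacyc x h
  constructor
  · intro hf
    obtain ⟨p, hp, hd, hs, ha⟩ := forward_dir E hac τ k v hinj hvτ f hf
    refine ⟨p, hp, hd, ?_, ?_, ?_⟩
    · intro i hi
      have := hs i hi
      rwa [splitFlow, dif_pos hi] at this
    · intro i j hij hi hj
      have := ha i j
      rwa [arcFlow, if_neg hj, moveFlow, dif_pos ⟨hij, hi, hj⟩] at this
    · intro i hiτ hi
      have := ha i τ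
      rwa [arcFlow, if_pos rfl, sinkFlow, dif_pos ⟨hiτ, hi⟩] at this
  · rintro ⟨p, hp, hd, hs, hm, ht⟩
    refine backward_dir E hac τ hτ k v hinj hvτ f p hp hd ?_ ?_
    · intro i hi
      rw [splitFlow, dif_pos hi, hs]
    · intro i j
      have hE : (∃ s, [i, j] <:+: p s) → E i j := fun ⟨s, h⟩ => aux_rel h (hp s).2.2
      have hi : E i j → i ≠ τ := by rintro h rfl; exact hτ _ h
      by_cases hij : E i j
      · by_cases hj : j = τ
        · subst hj
          rw [arcFlow, if_pos rfl, sinkFlow, dif_pos ⟨hij, hi hij⟩, ht]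
        · rw [arcFlow, if_neg hj, moveFlow, dif_pos ⟨hij, hi hij, hj⟩, hm]
      · rw [if_neg fun h => hij (hE h)]
        by_contra hne
        exact hij (arcFlow_rel (Nat.one_le_iff_ne_zero.2 hne)).1
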